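/- arXiv:2602.16234 — 8 statements merged into one kernel-verified Lean document; each statement's English description precedes it below -/
import Mathlib

section
/- Let ε ≥ 0 and consider a GSAS with independent availabilities, and let π = (π_1,…,π_n) be a strategy profile that implements μ = (μ_1,…,μ_n). Then π is an ε-Nash equilibrium if and only if for every player i, U_i(μ) ≥ max_{μ'_i ∈ M_i} U_i(μ'_i, μ_{−i}) − ε. -/
/-!
Since the availabilities are independent, the sampled actions of the players are independent too,
so the law of the realized action profile under a strategy profile is the product of the marginals.
Hence the expected payoff of a strategy profile is the mixed payoff of the distributions it
implements (`payoff_eq_mixedPayoff`). A deviation `σ'` of player `i` therefore changes the payoff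
exactly as replacing `μ i` by the marginal of `σ'` does, and these marginals are precisely the
elements of `implementableSet i`.
-/

open Finset

/-- A game with stochastic action sets (GSAS) with independent availabilities. -/
structure GSAS (ι : Type) [Fintype ι] [DecidableEq ι]
    (A : ι → Type) [∀ i, Fintype (A i)] [∀ i, DecidableEq (A i)] [∀ i, Nonempty (A i)] where
  /-- utility functions, with values in `[-1, 1]` -/
  u : ι → (∀ j, A j) → ℝ
  u_bdd : ∀ i a, u i a ∈ Set.Icc (-1 : ℝ) 1
  /-- the collection `𝒮 i` of possible availability sets of player `i` -/
  avail : ∀ i, Finset (Finset (A i))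
  avail_nonempty : ∀ i, ∀ S ∈ avail i, S.Nonempty
  /-- `ρ i` is a probability distribution on `avail i` -/
  ρ : ∀ i, Finset (A i) → ℝ
  ρ_nonneg : ∀ i S, 0 ≤ ρ i S
  ρ_supp : ∀ i S, S ∉ avail i → ρ i S = 0
  ρ_sum : ∀ i, ∑ S ∈ avail i, ρ i S = 1

namespace GSAS

variable {ι : Type} [Fintype ι] [DecidableEq ι]
  {A : ι → Type} [∀ i, Fintype (A i)] [∀ i, DecidableEq (A i)] [∀ i, Nonempty (A i)]

/-- A (mixed) strategy of player `i`: for each availability set a probability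
distribution on `A i` supported in the availability set. -/
structure Strategy (G : GSAS ι A) (i : ι) where
  π : Finset (A i) → A i → ℝ
  nonneg : ∀ S a, 0 ≤ π S a
  sum_one : ∀ S ∈ G.avail i, ∑ a, π S a = 1
  supp : ∀ S ∈ G.avail i, ∀ a ∉ S, π S a = 0

variable (G : GSAS ι A)

/-- The marginal distribution `ℙ[a ; ρ i, π]` induced by a strategy. -/
noncomputable def marginal {i : ι} (σ : G.Strategy i) (a : A i) : ℝ :=
  ∑ S ∈ G.avail i, G.ρ i S * σ.π S a

/-- `σ` implements the distribution `μ` on `A i`. -/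
def Implements {i : ι} (σ : G.Strategy i) (μ : A i → ℝ) : Prop :=
  ∀ a, μ a = G.marginal σ a

/-- Expected payoff `U_i(π)` of a strategy profile. -/
noncomputable def payoff (σ : ∀ i, G.Strategy i) (i : ι) : ℝ :=
  ∑ S ∈ Fintype.piFinset G.avail,
    (∏ j, G.ρ j (S j)) * ∑ a : ∀ j, A j, (∏ j, (σ j).π (S j) (a j)) * G.u i a

/-- Expected payoff `U_i(μ)` of a profile of mixed (marginal) distributions. -/
noncomputable def mixedPayoff (μ : ∀ j, A j → ℝ) (i : ι) : ℝ :=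
  ∑ a : ∀ j, A j, (∏ j, μ j (a j)) * G.u i a

/-- `σ` is an `ε`-Nash equilibrium of the GSAS: no player can gain more than `ε`
by unilaterally deviating to any other strategy. -/
def IsEpsNash (σ : ∀ i, G.Strategy i) (ε : ℝ) : Prop :=
  ∀ i, ∀ σ' : G.Strategy i, G.payoff (Function.update σ i σ') i ≤ G.payoff σ i + ε

/-- The set `M i` of implementable distributions of player `i`. -/
def implementableSet (i : ι) : Set (A i → ℝ) :=
  {μ | ∃ σ : G.Strategy i, G.Implements σ μ}

end GSAS

namespace GSAS

variable {ι : Type} [Fintype ι] [DecidableEq ι]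
  {A : ι → Type} [∀ i, Fintype (A i)] [∀ i, DecidableEq (A i)] [∀ i, Nonempty (A i)]

/-- The expected payoff of a strategy profile depends only on the implemented marginals; this is
where independence of the availabilities enters, by expanding the product of the marginals into a
sum over availability profiles. -/
theorem payoff_eq_mixedPayoff (G : GSAS ι A) (σ : ∀ i, G.Strategy i) (μ : ∀ j, A j → ℝ)
    (h : ∀ j, G.Implements (σ j) (μ j)) (i : ι) : G.payoff σ i = G.mixedPayoff μ i := by
  have hprod (a : ∀ j, A j) : ∏ j, μ j (a j) =
      ∑ S ∈ Fintype.piFinset G.avail, ∏ j, G.ρ j (S j) * (σ j).π (S j) (a j) := by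
    rw [← Finset.prod_univ_sum G.avail fun j T => G.ρ j T * (σ j).π T (a j)]
    exact Finset.prod_congr rfl fun j _ => h j (a j)
  simp_rw [payoff, mixedPayoff, hprod, Finset.mul_sum, Finset.sum_mul, Finset.prod_mul_distrib]
  rw [Finset.sum_comm]
  simp_rw [mul_assoc]

theorem implements_update (G : GSAS ι A) {σ : ∀ i, G.Strategy i} {μ : ∀ j, A j → ℝ}
    (h : ∀ j, G.Implements (σ j) (μ j)) {i : ι} {σ' : G.Strategy i} {μ' : A i → ℝ}
    (h' : G.Implements σ' μ') (j : ι) :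
    G.Implements (Function.update σ i σ' j) (Function.update μ i μ' j) := by
  obtain rfl | hj := eq_or_ne j i
  · simpa using h'
  · simpa [hj] using h j

end GSAS

/-- If `σ` implements `μ`, then `σ` is an `ε`-Nash equilibrium if and
only if for every player `i` and every implementable `μ' ∈ M i`,
`U_i(μ'_i, μ_{-i}) ≤ U_i(μ) + ε`. -/
theorem stmt1 {ι : Type} [Fintype ι] [DecidableEq ι]
    {A : ι → Type} [∀ i, Fintype (A i)] [∀ i, DecidableEq (A i)] [∀ i, Nonempty (A i)]
    (G : GSAS ι A) (ε : ℝ) (hε : 0 ≤ ε)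
    (σ : ∀ i, G.Strategy i) (μ : ∀ j, A j → ℝ)
    (himpl : ∀ j, G.Implements (σ j) (μ j)) :
    G.IsEpsNash σ ε ↔
      ∀ i, ∀ μ' ∈ G.implementableSet i,
        G.mixedPayoff (Function.update μ i μ') i ≤ G.mixedPayoff μ i + ε := by
  constructor
  · rintro hN i μ' ⟨σ', h'⟩
    rw [← G.payoff_eq_mixedPayoff _ _ (G.implements_update himpl h') i,
      ← G.payoff_eq_mixedPayoff σ μ himpl i]
    exact hN i σ'
  · intro hM i σ'
    have h' : G.Implements σ' (G.marginal σ') := fun _ => rfl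
    rw [G.payoff_eq_mixedPayoff _ _ (G.implements_update himpl h') i,
      G.payoff_eq_mixedPayoff σ μ himpl i]
    exact hM i _ ⟨σ', h'⟩
end

section
/- For a two-player zero-sum GSAS with independent availabilities: (i) the minimax equality max_{μ_1∈M_1} min_{μ_2∈M_2} U(μ_1, μ_2) = min_{μ_2∈M_2} max_{μ_1∈M_1} U(μ_1, μ_2) holds; and (ii) a strategy profile (π*_1, π*_2) implementing (μ*_1, μ*_2) is a Nash equilibrium if and only if μ*_1 attains max_{μ_1∈M_1} min_{μ_2∈M_2} U(μ_1, μ_2) and μ*_2 attains min_{μ_2∈M_2} max_{μ_1∈M_1} U(μ_1, μ_2). -/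
/-!
Independence of the availabilities makes the payoff of a strategy profile depend only on the two
marginals: `payoff π1 π2 = U μ1 μ2` (`payoff_eq_U`). Hence a profile is a Nash equilibrium exactly
when its marginals form a saddle point of `U` on `M1 × M2`. The set `M1` is convex, and it is the
image of a compact set of strategies under the linear map sending a strategy to its marginal, hence
compact; the same holds for `M2` by exchanging the players. As `U` is bilinear, the Sion–von Neumann
theorem provides a saddle point. The rest is order theory: a saddle point forces the max-min and the
min-max values to agree, and once they agree, the saddle points are exactly the pairs of an optimal
strategy for each player (`minimax_of_saddle`, `saddle_iff_optimal`).
-/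

open Finset

/-- A two-player zero-sum game with stochastic action sets (2p0s-GSAS) with
independent availabilities. `u` is the payoff of player 1; player 2 receives `-u`. -/
structure ZSGSAS (A1 A2 : Type) [Fintype A1] [DecidableEq A1] [Nonempty A1]
    [Fintype A2] [DecidableEq A2] [Nonempty A2] where
  u : A1 → A2 → ℝ
  u_bdd : ∀ a b, u a b ∈ Set.Icc (-1 : ℝ) 1
  avail1 : Finset (Finset A1)
  avail2 : Finset (Finset A2)
  avail1_nonempty : ∀ S ∈ avail1, S.Nonempty
  avail2_nonempty : ∀ S ∈ avail2, S.Nonempty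
  ρ1 : Finset A1 → ℝ
  ρ2 : Finset A2 → ℝ
  ρ1_nonneg : ∀ S, 0 ≤ ρ1 S
  ρ2_nonneg : ∀ S, 0 ≤ ρ2 S
  ρ1_supp : ∀ S ∉ avail1, ρ1 S = 0
  ρ2_supp : ∀ S ∉ avail2, ρ2 S = 0
  ρ1_sum : ∑ S ∈ avail1, ρ1 S = 1
  ρ2_sum : ∑ S ∈ avail2, ρ2 S = 1

namespace ZSGSAS

variable {A1 A2 : Type} [Fintype A1] [DecidableEq A1] [Nonempty A1]
  [Fintype A2] [DecidableEq A2] [Nonempty A2]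

variable (G : ZSGSAS A1 A2)

/-- `π` is a strategy of player 1. -/
def IsStrategy1 (π : Finset A1 → A1 → ℝ) : Prop :=
  (∀ S a, 0 ≤ π S a) ∧ (∀ S ∈ G.avail1, ∑ a, π S a = 1) ∧
    (∀ S ∈ G.avail1, ∀ a ∉ S, π S a = 0)

/-- `π` is a strategy of player 2. -/
def IsStrategy2 (π : Finset A2 → A2 → ℝ) : Prop :=
  (∀ S b, 0 ≤ π S b) ∧ (∀ S ∈ G.avail2, ∑ b, π S b = 1) ∧
    (∀ S ∈ G.avail2, ∀ b ∉ S, π S b = 0)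

/-- Marginal `ℙ[a ; ρ1, π]` of a strategy of player 1. -/
noncomputable def marginal1 (π : Finset A1 → A1 → ℝ) (a : A1) : ℝ :=
  ∑ S ∈ G.avail1, G.ρ1 S * π S a

/-- Marginal `ℙ[b ; ρ2, π]` of a strategy of player 2. -/
noncomputable def marginal2 (π : Finset A2 → A2 → ℝ) (b : A2) : ℝ :=
  ∑ S ∈ G.avail2, G.ρ2 S * π S b

/-- `M1`, the set of implementable distributions of player 1. -/
def M1 : Set (A1 → ℝ) :=
  {μ | ∃ π, G.IsStrategy1 π ∧ ∀ a, μ a = G.marginal1 π a}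

/-- `M2`, the set of implementable distributions of player 2. -/
def M2 : Set (A2 → ℝ) :=
  {μ | ∃ π, G.IsStrategy2 π ∧ ∀ b, μ b = G.marginal2 π b}

/-- `U(μ1, μ2)`, the expected payoff of player 1 under mixed distributions. -/
noncomputable def U (μ1 : A1 → ℝ) (μ2 : A2 → ℝ) : ℝ :=
  ∑ a, ∑ b, μ1 a * μ2 b * G.u a b

/-- Expected payoff of player 1 under a strategy profile. -/
noncomputable def payoff (π1 : Finset A1 → A1 → ℝ) (π2 : Finset A2 → A2 → ℝ) : ℝ :=
  ∑ S1 ∈ G.avail1, ∑ S2 ∈ G.avail2,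
    G.ρ1 S1 * G.ρ2 S2 * ∑ a, ∑ b, π1 S1 a * π2 S2 b * G.u a b

/-- `(π1, π2)` is an `ε`-Nash equilibrium: neither player (player 2 receiving `-u`)
can gain more than `ε` by a unilateral deviation. -/
def IsEpsNash (π1 : Finset A1 → A1 → ℝ) (π2 : Finset A2 → A2 → ℝ) (ε : ℝ) : Prop :=
  (∀ π1', G.IsStrategy1 π1' → G.payoff π1' π2 ≤ G.payoff π1 π2 + ε) ∧
    (∀ π2', G.IsStrategy2 π2' → G.payoff π1 π2 - ε ≤ G.payoff π1 π2')

end ZSGSAS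

/-! ### Saddle points of bounded real functions -/

section Order

variable {X Y : Type*} {f : X → Y → ℝ}

/-- At a saddle point all four values coincide with the value of `f` there. Boundedness is needed
because `⨆` and `⨅` of unbounded real families are junk. -/
lemma minimax_of_saddle (hf : ∃ C, ∀ x y, |f x y| ≤ C) {a : X} {b : Y}
    (h : ∀ x y, f x b ≤ f a y) :
    (⨅ y, f a y) = f a b ∧ (⨆ x, f x b) = f a b ∧
      (⨆ x, ⨅ y, f x y) = f a b ∧ (⨅ y, ⨆ x, f x y) = f a b := by
  obtain ⟨C, hC⟩ := hf
  have : Nonempty X := ⟨a⟩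
  have : Nonempty Y := ⟨b⟩
  have hlo (x : X) : BddBelow (Set.range fun y => f x y) :=
    ⟨-C, by rintro _ ⟨y, rfl⟩; exact (abs_le.1 (hC x y)).1⟩
  have hup (y : Y) : BddAbove (Set.range fun x => f x y) :=
    ⟨C, by rintro _ ⟨x, rfl⟩; exact (abs_le.1 (hC x y)).2⟩
  have hinf : (⨅ y, f a y) = f a b := le_antisymm (ciInf_le (hlo a) b) (le_ciInf fun y => h a y)
  have hsup : (⨆ x, f x b) = f a b :=
    le_antisymm (ciSup_le fun x => h x b) (le_ciSup (hup b) a)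
  have h_inf_le (x : X) : (⨅ y, f x y) ≤ f a b := (ciInf_le (hlo x) b).trans (h x b)
  have h_le_sup (y : Y) : f a b ≤ ⨆ x, f x y := (h a y).trans (le_ciSup (hup y) a)
  refine ⟨hinf, hsup, le_antisymm (ciSup_le h_inf_le) ?_, le_antisymm ?_ (le_ciInf h_le_sup)⟩
  · rw [← hinf]
    exact le_ciSup (f := fun x => ⨅ y, f x y) ⟨f a b, by rintro _ ⟨x, rfl⟩; exact h_inf_le x⟩ a
  · rw [← hsup]
    exact ciInf_le (f := fun y => ⨆ x, f x y) ⟨f a b, by rintro _ ⟨y, rfl⟩; exact h_le_sup y⟩ b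

/-- If some saddle point exists, then `(x, y)` is a saddle point iff `x` is max-min optimal and `y`
is min-max optimal. -/
lemma saddle_iff_optimal (hf : ∃ C, ∀ x y, |f x y| ≤ C)
    (hs : ∃ a b, ∀ x y, f x b ≤ f a y) (x : X) (y : Y) :
    (∀ x' y', f x' y ≤ f x y') ↔
      (⨅ y', f x y') = (⨆ x', ⨅ y', f x' y') ∧ (⨆ x', f x' y) = ⨅ y', ⨆ x', f x' y' := by
  constructor
  · intro h
    obtain ⟨h1, h2, h3, h4⟩ := minimax_of_saddle hf h
    exact ⟨h1.trans h3.symm, h2.trans h4.symm⟩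
  · rintro ⟨hx, hy⟩ x' y'
    obtain ⟨a, b, h⟩ := hs
    obtain ⟨-, -, h3, h4⟩ := minimax_of_saddle hf h
    obtain ⟨C, hC⟩ := hf
    calc f x' y ≤ ⨆ x', f x' y :=
          le_ciSup (f := fun x' => f x' y)
            ⟨C, by rintro _ ⟨z, rfl⟩; exact (abs_le.1 (hC z y)).2⟩ x'
      _ = ⨅ y', f x y' := by rw [hy, h4, hx, h3]
      _ ≤ f x y' := ciInf_le ⟨-C, by rintro _ ⟨z, rfl⟩; exact (abs_le.1 (hC x z)).1⟩ y'

end Order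

namespace ZSGSAS

variable {A1 A2 : Type} [Fintype A1] [DecidableEq A1] [Nonempty A1]
  [Fintype A2] [DecidableEq A2] [Nonempty A2] (G : ZSGSAS A1 A2)

/-- The game with the roles of the two players exchanged, so that `G.M2` is `G.swap.M1`
definitionally. -/
def swap : ZSGSAS A2 A1 where
  u b a := -G.u a b
  u_bdd b a := by
    have h := G.u_bdd a b
    exact ⟨by linarith [h.2], by linarith [h.1]⟩
  avail1 := G.avail2
  avail2 := G.avail1
  avail1_nonempty := G.avail2_nonempty
  avail2_nonempty := G.avail1_nonempty
  ρ1 := G.ρ2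
  ρ2 := G.ρ1
  ρ1_nonneg := G.ρ2_nonneg
  ρ2_nonneg := G.ρ1_nonneg
  ρ1_supp := G.ρ2_supp
  ρ2_supp := G.ρ1_supp
  ρ1_sum := G.ρ2_sum
  ρ2_sum := G.ρ1_sum

/-! ### Implementable distributions -/

lemma M1_nonempty : G.M1.Nonempty := by
  classical
  have hc : ∀ S : Finset A1, ∃ c, S ∈ G.avail1 → c ∈ S := by
    intro S
    by_cases hS : S ∈ G.avail1
    · obtain ⟨c, hc⟩ := G.avail1_nonempty S hS
      exact ⟨c, fun _ => hc⟩
    · exact ⟨Classical.arbitrary A1, fun h => absurd h hS⟩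
  choose c hc using hc
  -- A pure strategy: play a chosen available action.
  refine ⟨_, fun S a => if a = c S then 1 else 0, ⟨?_, ?_, ?_⟩, fun a => rfl⟩
  · intro S a
    dsimp only
    split_ifs <;> norm_num
  · intro S _
    simp
  · intro S hS a ha
    have : a ≠ c S := fun h => ha (h ▸ hc S hS)
    simp [this]

lemma M1_convex : Convex ℝ G.M1 := by
  rintro μ ⟨π, ⟨hπ0, hπ1, hπs⟩, hμ⟩ ν ⟨σ, ⟨hσ0, hσ1, hσs⟩, hν⟩ s t hs ht hst
  refine ⟨fun S a => s * π S a + t * σ S a, ⟨?_, ?_, ?_⟩, ?_⟩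
  · intro S a
    exact add_nonneg (mul_nonneg hs (hπ0 S a)) (mul_nonneg ht (hσ0 S a))
  · intro S hS
    rw [sum_add_distrib, ← mul_sum, ← mul_sum, hπ1 S hS, hσ1 S hS]
    linarith
  · intro S hS a ha
    simp [hπs S hS a ha, hσs S hS a ha]
  · intro a
    simp only [Pi.add_apply, Pi.smul_apply, smul_eq_mul, hμ, hν, marginal1, mul_sum]
    rw [← sum_add_distrib]
    exact sum_congr rfl fun S _ => by ring

/-- Strategies of player 1 that vanish on the sets outside `avail1`. The normalisation is harmless,
as marginals ignore such sets, and it makes the set of strategies bounded. -/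
def normStrat1 : Set (Finset A1 → A1 → ℝ) :=
  {π | G.IsStrategy1 π ∧ ∀ S ∉ G.avail1, ∀ a, π S a = 0}

lemma normStrat1_isCompact : IsCompact G.normStrat1 := by
  refine IsCompact.of_isClosed_subset (isCompact_Icc (a := 0) (b := 1)) ?_ ?_
  · have hc (S : Finset A1) (a : A1) : Continuous fun π : Finset A1 → A1 → ℝ => π S a := by
      fun_prop
    simp only [normStrat1, IsStrategy1, Set.ofPred_and, Set.ofPred_forall]
    refine ((?_ : IsClosed _).inter (IsClosed.inter ?_ ?_)).inter ?_
    · exact isClosed_iInter fun S => isClosed_iInter fun a => isClosed_le continuous_const (hc S a)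
    · exact isClosed_iInter fun S => isClosed_iInter fun _ =>
        isClosed_eq (continuous_finsetSum _ fun a _ => hc S a) continuous_const
    · exact isClosed_iInter fun S => isClosed_iInter fun _ => isClosed_iInter fun a =>
        isClosed_iInter fun _ => isClosed_eq (hc S a) continuous_const
    · exact isClosed_iInter fun S => isClosed_iInter fun _ => isClosed_iInter fun a =>
        isClosed_eq (hc S a) continuous_const
  · rintro π ⟨⟨h0, h1, -⟩, hout⟩
    refine ⟨fun S a => h0 S a, fun S a => ?_⟩
    by_cases hS : S ∈ G.avail1
    · exact (single_le_sum (fun b _ => h0 S b) (mem_univ a)).trans_eq (h1 S hS)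
    · simp [hout S hS a]

lemma M1_eq_image : G.M1 = G.marginal1 '' G.normStrat1 := by
  classical
  ext μ
  constructor
  · rintro ⟨π, ⟨h0, h1, hs⟩, hμ⟩
    refine ⟨fun S a => if S ∈ G.avail1 then π S a else 0, ⟨⟨?_, ?_, ?_⟩, ?_⟩, ?_⟩
    · intro S a
      dsimp only
      split_ifs
      exacts [h0 S a, le_rfl]
    · intro S hS
      simpa [hS] using h1 S hS
    · intro S hS a ha
      simpa [hS] using hs S hS a ha
    · intro S hS a
      simp [hS]
    · funext a
      rw [hμ]
      exact sum_congr rfl fun S hS => by simp [hS]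
  · rintro ⟨π, ⟨hπ, -⟩, rfl⟩
    exact ⟨π, hπ, fun _ => rfl⟩

lemma M1_isCompact : IsCompact G.M1 := by
  rw [M1_eq_image]
  refine G.normStrat1_isCompact.image ?_
  unfold marginal1
  fun_prop

/-! ### The payoff as a bilinear form in the marginals -/

/-- By independence of the availabilities, the payoff depends only on the marginals. -/
lemma payoff_eq_U (π1 : Finset A1 → A1 → ℝ) (π2 : Finset A2 → A2 → ℝ) :
    G.payoff π1 π2 = G.U (G.marginal1 π1) (G.marginal2 π2) := by
  simp only [payoff, U, marginal1, marginal2, sum_mul, mul_sum]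
  -- Both sides sum over `(S1, S2, a, b)`; only the order differs.
  calc _ = ∑ S1 ∈ G.avail1, ∑ a, ∑ S2 ∈ G.avail2, ∑ b,
        G.ρ1 S1 * G.ρ2 S2 * (π1 S1 a * π2 S2 b * G.u a b) :=
        sum_congr rfl fun S1 _ => sum_comm
    _ = ∑ a, ∑ S1 ∈ G.avail1, ∑ S2 ∈ G.avail2, ∑ b,
        G.ρ1 S1 * G.ρ2 S2 * (π1 S1 a * π2 S2 b * G.u a b) := sum_comm
    _ = ∑ a, ∑ S1 ∈ G.avail1, ∑ b, ∑ S2 ∈ G.avail2,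
        G.ρ1 S1 * G.ρ2 S2 * (π1 S1 a * π2 S2 b * G.u a b) :=
        sum_congr rfl fun a _ => sum_congr rfl fun S1 _ => sum_comm
    _ = ∑ a, ∑ b, ∑ S1 ∈ G.avail1, ∑ S2 ∈ G.avail2,
        G.ρ1 S1 * G.ρ2 S2 * (π1 S1 a * π2 S2 b * G.u a b) :=
        sum_congr rfl fun a _ => sum_comm
    _ = ∑ a, ∑ b, ∑ S2 ∈ G.avail2, ∑ S1 ∈ G.avail1,
        G.ρ1 S1 * G.ρ2 S2 * (π1 S1 a * π2 S2 b * G.u a b) :=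
        sum_congr rfl fun a _ => sum_congr rfl fun b _ => sum_comm
    _ = _ := by
        refine sum_congr rfl fun a _ => sum_congr rfl fun b _ => sum_congr rfl fun S2 _ =>
          sum_congr rfl fun S1 _ => ?_
        ring

lemma U_add_smul_left (s t : ℝ) (μ μ' : A1 → ℝ) (ν : A2 → ℝ) :
    G.U (s • μ + t • μ') ν = s * G.U μ ν + t * G.U μ' ν := by
  simp only [U, mul_sum, ← sum_add_distrib]
  refine sum_congr rfl fun a _ => sum_congr rfl fun b _ => ?_
  simp only [Pi.add_apply, Pi.smul_apply, smul_eq_mul]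
  ring

lemma U_add_smul_right (s t : ℝ) (μ : A1 → ℝ) (ν ν' : A2 → ℝ) :
    G.U μ (s • ν + t • ν') = s * G.U μ ν + t * G.U μ ν' := by
  simp only [U, mul_sum, ← sum_add_distrib]
  refine sum_congr rfl fun a _ => sum_congr rfl fun b _ => ?_
  simp only [Pi.add_apply, Pi.smul_apply, smul_eq_mul]
  ring

lemma U_continuous : Continuous fun p : (A1 → ℝ) × (A2 → ℝ) => G.U p.1 p.2 := by
  unfold U
  fun_prop

lemma U_bounded : ∃ C, ∀ (ν1 : G.M1) (ν2 : G.M2), |G.U ν1 ν2| ≤ C := by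
  obtain ⟨C, hC⟩ := (G.M1_isCompact.prod G.swap.M1_isCompact).exists_bound_of_continuousOn
    G.U_continuous.continuousOn
  exact ⟨C, fun ν1 ν2 => hC (ν1, ν2) ⟨ν1.2, ν2.2⟩⟩

/-! ### Equilibria and saddle points -/

/-- The Sion–von Neumann theorem for `U`, with the minimising player's variable first as in
`Sion.exists_isSaddlePointOn`. -/
lemma exists_saddle : ∃ (a : G.M1) (b : G.M2), ∀ (ν1 : G.M1) (ν2 : G.M2), G.U ν1 b ≤ G.U a ν2 := by
  have hM2 : Convex ℝ G.M2 := G.swap.M1_convex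
  obtain ⟨b, hb, a, ha, h⟩ := Sion.exists_isSaddlePointOn (X := G.M2) (Y := G.M1)
    (f := fun ν2 ν1 => G.U ν1 ν2) G.swap.M1_nonempty hM2 G.swap.M1_isCompact
    (fun ν1 _ => (G.U_continuous.comp (Continuous.prodMk_right ν1)).lowerSemicontinuous
      |>.lowerSemicontinuousOn _)
    (fun ν1 _ => ConvexOn.quasiconvexOn
      ⟨hM2, fun x _ y _ s t _ _ _ => (G.U_add_smul_right s t ν1 x y).le⟩)
    G.M1_convex G.M1_nonempty G.M1_isCompact
    (fun ν2 _ => (G.U_continuous.comp (Continuous.prodMk_left ν2)).upperSemicontinuous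
      |>.upperSemicontinuousOn _)
    (fun ν2 _ => ConcaveOn.quasiconcaveOn
      ⟨G.M1_convex, fun x _ y _ s t _ _ _ => (G.U_add_smul_left s t x y ν2).ge⟩)
  exact ⟨⟨a, ha⟩, ⟨b, hb⟩, fun ν1 ν2 => h ν2 ν2.2 ν1 ν1.2⟩

/-- A strategy profile is a Nash equilibrium iff its marginals form a saddle point of `U`. -/
lemma isEpsNash_zero_iff {π1 : Finset A1 → A1 → ℝ} {π2 : Finset A2 → A2 → ℝ}
    (h1 : G.IsStrategy1 π1) (h2 : G.IsStrategy2 π2) :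
    G.IsEpsNash π1 π2 0 ↔ ∀ (ν1 : G.M1) (ν2 : G.M2),
      G.U ν1 (G.marginal2 π2) ≤ G.U (G.marginal1 π1) ν2 := by
  simp only [IsEpsNash, payoff_eq_U, add_zero, sub_zero]
  constructor
  · rintro ⟨hN1, hN2⟩ ⟨ν1, σ1, hσ1, hν1⟩ ⟨ν2, σ2, hσ2, hν2⟩
    obtain rfl : ν1 = G.marginal1 σ1 := funext hν1
    obtain rfl : ν2 = G.marginal2 σ2 := funext hν2
    exact (hN1 σ1 hσ1).trans (hN2 σ2 hσ2)
  · intro h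
    exact ⟨fun σ1 hσ1 => h ⟨_, σ1, hσ1, fun _ => rfl⟩ ⟨_, π2, h2, fun _ => rfl⟩,
      fun σ2 hσ2 => h ⟨_, π1, h1, fun _ => rfl⟩ ⟨_, σ2, hσ2, fun _ => rfl⟩⟩

end ZSGSAS

/-- For a 2p0s-GSAS: (i) the minimax equality over the implementable
sets `M1`, `M2` holds; and (ii) a strategy profile implementing `(μ1, μ2)` is a Nash
equilibrium iff `μ1` attains the max-min and `μ2` attains the min-max. -/
theorem stmt3 {A1 A2 : Type} [Fintype A1] [DecidableEq A1] [Nonempty A1]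
    [Fintype A2] [DecidableEq A2] [Nonempty A2]
    (G : ZSGSAS A1 A2)
    (π1 : Finset A1 → A1 → ℝ) (π2 : Finset A2 → A2 → ℝ)
    (h1 : G.IsStrategy1 π1) (h2 : G.IsStrategy2 π2)
    (μ1 : A1 → ℝ) (μ2 : A2 → ℝ)
    (him1 : ∀ a, μ1 a = G.marginal1 π1 a) (him2 : ∀ b, μ2 b = G.marginal2 π2 b) :
    ((⨆ ν1 : G.M1, ⨅ ν2 : G.M2, G.U ν1 ν2) = ⨅ ν2 : G.M2, ⨆ ν1 : G.M1, G.U ν1 ν2) ∧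
      (G.IsEpsNash π1 π2 0 ↔
        (μ1 ∈ G.M1 ∧ (⨅ ν2 : G.M2, G.U μ1 ν2) = ⨆ ν1 : G.M1, ⨅ ν2 : G.M2, G.U ν1 ν2) ∧
          (μ2 ∈ G.M2 ∧ (⨆ ν1 : G.M1, G.U ν1 μ2) = ⨅ ν2 : G.M2, ⨆ ν1 : G.M1, G.U ν1 ν2)) := by
  have hm1 : μ1 ∈ G.M1 := ⟨π1, h1, him1⟩
  have hm2 : μ2 ∈ G.M2 := ⟨π2, h2, him2⟩
  constructor
  · obtain ⟨a, b, h⟩ := G.exists_saddle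
    obtain ⟨-, -, h3, h4⟩ :=
      minimax_of_saddle (f := fun (ν1 : G.M1) (ν2 : G.M2) => G.U ν1 ν2) G.U_bounded h
    exact h3.trans h4.symm
  · have hs := saddle_iff_optimal (f := fun (ν1 : G.M1) (ν2 : G.M2) => G.U ν1 ν2)
      G.U_bounded G.exists_saddle ⟨μ1, hm1⟩ ⟨μ2, hm2⟩
    rw [G.isEpsNash_zero_iff h1 h2, ← funext him1, ← funext him2]
    exact hs.trans ⟨fun h => ⟨⟨hm1, h.1⟩, hm2, h.2⟩, fun h => ⟨h.1.2, h.2.2⟩⟩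
end

section
/- Consider a GSAS 𝒢 = (𝒢_orig, 𝒮, ρ) with independent availabilities, where 𝒢_orig is the underlying n-player normal-form game with action sets A_i and utilities u_i. Let ε ≥ 0 and let x* = (x*_1,…,x*_n) with x*_i ∈ Δ(A_i) be an ε-Nash equilibrium of 𝒢_orig (i.e., for every i and every x'_i ∈ Δ(A_i), Σ_a (x'_i(a_i) Π_{j≠i} x*_j(a_j)) u_i(a) ≤ Σ_a (Π_j x*_j(a_j)) u_i(a) + ε). If each x*_i is implementable in 𝒢 by some strategy π_i (i.e., the profile π* = (π_1,…,π_n) implements x*), then π* is an ε-Nash equilibrium of 𝒢. -/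
/-!
By independence of the availabilities, the payoff of a strategy profile in the GSAS is the payoff,
in the original game, of the profile of its marginals (`GSAS.payoff_eq_mixedPayoff_marginal`):
exchanging the sums over actions and availability sets leaves, for each action profile, a sum over
`∏ j, 𝒮 j` of a product over players, which factors. A deviation of player `i` in the GSAS
changes only the `i`-th marginal, and this new marginal is a probability distribution on `A i`; so
it is a deviation in the original game, where it gains at most `ε`.
-/

open Finset

namespace GSAS

variable {ι : Type} [Fintype ι] [DecidableEq ι]
  {A : ι → Type} [∀ i, Fintype (A i)] [∀ i, DecidableEq (A i)] [∀ i, Nonempty (A i)]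
  (G : GSAS ι A)

theorem marginal_nonneg {i : ι} (σ : G.Strategy i) (a : A i) : 0 ≤ G.marginal σ a :=
  Finset.sum_nonneg fun S _ => mul_nonneg (G.ρ_nonneg i S) (σ.nonneg S a)

theorem sum_marginal {i : ι} (σ : G.Strategy i) : ∑ a, G.marginal σ a = 1 := by
  unfold marginal
  rw [Finset.sum_comm, ← G.ρ_sum i]
  refine Finset.sum_congr rfl fun S hS => ?_
  rw [← Finset.mul_sum, σ.sum_one S hS, mul_one]

/-- Payoffs in the GSAS depend on a strategy profile only through its marginals; this is where
the independence of the availabilities is used. -/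
theorem payoff_eq_mixedPayoff_marginal (σ : ∀ i, G.Strategy i) (i : ι) :
    G.payoff σ i = G.mixedPayoff (fun j => G.marginal (σ j)) i := by
  unfold payoff mixedPayoff marginal
  simp_rw [Finset.mul_sum]
  rw [Finset.sum_comm]
  refine Finset.sum_congr rfl fun a _ => ?_
  rw [Finset.prod_univ_sum, Finset.sum_mul]
  refine Finset.sum_congr rfl fun S _ => ?_
  rw [Finset.prod_mul_distrib, mul_assoc]

end GSAS

/-- If `x*` is an `ε`-Nash equilibrium of the original normal-form
game `𝒢_orig`, and `x*` is implementable in the GSAS `𝒢` by the profile `σ`, then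
`σ` is an `ε`-Nash equilibrium of `𝒢`. -/
theorem stmt4 {ι : Type} [Fintype ι] [DecidableEq ι]
    {A : ι → Type} [∀ i, Fintype (A i)] [∀ i, DecidableEq (A i)] [∀ i, Nonempty (A i)]
    (G : GSAS ι A) (ε : ℝ) (hε : 0 ≤ ε)
    (x : ∀ j, A j → ℝ)
    (hx_nonneg : ∀ j a, 0 ≤ x j a) (hx_sum : ∀ j, ∑ a, x j a = 1)
    (hNE : ∀ i, ∀ x' : A i → ℝ, (∀ a, 0 ≤ x' a) → (∑ a, x' a = 1) →
      G.mixedPayoff (Function.update x i x') i ≤ G.mixedPayoff x i + ε)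
    (σ : ∀ i, G.Strategy i) (himpl : ∀ j, G.Implements (σ j) (x j)) :
    G.IsEpsNash σ ε := by
  intro i σ'
  have hx : (fun j => G.marginal (σ j)) = x := by
    funext j a
    exact (himpl j a).symm
  have hdev : (fun j => G.marginal (Function.update σ i σ' j))
      = Function.update x i (G.marginal σ') := by
    funext j
    rcases eq_or_ne j i with rfl | hj
    · simp
    · simp [hj, ← hx]
  rw [G.payoff_eq_mixedPayoff_marginal, G.payoff_eq_mixedPayoff_marginal, hx, hdev]
  exact hNE i _ (G.marginal_nonneg σ') (G.sum_marginal σ')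
end

section
/- In a GSAS with independent availabilities, fix a player i and an implementable distribution μ*_i on A_i, and suppose w_i ∈ Δ(A_i) satisfies Σ_{a'∈S_i} w_i(a') > 0 for all S_i ∈ 𝒮_i and the proportional strategy π_i(a_i|S_i) = w_i(a_i)𝟙{a_i∈S_i}/Σ_{a'_i∈S_i} w_i(a'_i) implements μ*_i. Let 𝒫_i be the set of all joint distributions Q on 𝒮_i × A_i of the form Q(S_i, a_i) = ρ_i(S_i) π'_i(a_i|S_i) where π'_i ranges over strategies implementing μ*_i. Then the joint distribution P_i(S_i, a_i) = ρ_i(S_i) π_i(a_i|S_i) is the unique maximizer over 𝒫_i of the Shannon entropy H(Q) = −Σ_{S_i∈𝒮_i, a_i∈A_i} Q(S_i,a_i) log Q(S_i,a_i). -/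
/-!
The argument is Gibbs' inequality. On the support of `P` one has
`log P(S,a) = f S + g a` with `f S = log ρ(S) - log (∑_{a' ∈ S} w a')` and `g a = log (w a)`.
The expectation of such a separable function depends only on the two marginals `ρ` and `μ`, which
all competitors `Q` share (`sum_separable`); moreover every `Q` vanishes wherever `P` does, because
`w a = 0` forces `μ a = 0`. Hence `H P = -∑ Q log P` and `H P - H Q = ∑ Q (log Q - log P)`, a
relative entropy, which is positive unless `Q = P` (`gibbs_le`, `gibbs_lt`).
-/

open Finset

/-- Pointwise Gibbs inequality in strict form. The terms `q - p` cancel after summation over two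
distributions of the same total mass. -/
lemma gibbs_lt {p q : ℝ} (hp : 0 ≤ p) (hq : 0 ≤ q) (hpq : p = 0 → q = 0) (hne : q ≠ p) :
    q - p < q * Real.log q - q * Real.log p := by
  have hp' : 0 < p := lt_of_le_of_ne hp fun h => hne (by rw [hpq h.symm, ← h])
  rcases hq.eq_or_lt with rfl | hq'
  · simpa using hp'
  · have h1 : p / q ≠ 1 := fun h => hne ((div_eq_one_iff_eq hq'.ne').1 h).symm
    have h2 := Real.log_lt_sub_one_of_pos (div_pos hp' hq') h1
    rw [Real.log_div hp'.ne' hq'.ne'] at h2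
    have h3 := mul_lt_mul_of_pos_left h2 hq'
    have h4 : q * (p / q - 1) = p - q := by field_simp
    linarith

lemma gibbs_le {p q : ℝ} (hp : 0 ≤ p) (hq : 0 ≤ q) (hpq : p = 0 → q = 0) :
    q - p ≤ q * Real.log q - q * Real.log p := by
  by_cases h : q = p
  · simp [h]
  · exact (gibbs_lt hp hq hpq h).le

/-- The expectation of a separable function `f S + g a` under a joint distribution depends only on
its two marginals. -/
lemma sum_separable {A : Type} [Fintype A] (avail : Finset (Finset A)) (ρ : Finset A → ℝ)
    (μ : A → ℝ) (σ : Finset A → A → ℝ) (h1 : ∀ S ∈ avail, ∑ a, σ S a = 1)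
    (hμ : ∀ a, μ a = ∑ S ∈ avail, ρ S * σ S a) (f : Finset A → ℝ) (g : A → ℝ) :
    ∑ S ∈ avail, ∑ a, ρ S * σ S a * (f S + g a) = ∑ S ∈ avail, ρ S * f S + ∑ a, μ a * g a := by
  simp only [mul_add, sum_add_distrib]
  congr 1
  · refine sum_congr rfl fun S hS => ?_
    rw [← sum_mul, ← mul_sum, h1 S hS, mul_one]
  · rw [sum_comm]
    refine sum_congr rfl fun a _ => ?_
    rw [hμ a, sum_mul]

/-- Let `μ` be implemented by the proportional strategy associated
with a weight vector `w ∈ Δ(A)` (positive mass on every availability set). Among all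
joint distributions `Q(S,a) = ρ(S) π'(a|S)` arising from strategies `π'` implementing
`μ`, the joint `P(S,a) = ρ(S) π(a|S)` of the proportional strategy is the unique
maximizer of the Shannon entropy. -/
theorem stmt7 {A : Type} [Fintype A] [DecidableEq A] [Nonempty A]
    (avail : Finset (Finset A)) (havail : ∀ S ∈ avail, S.Nonempty)
    (ρ : Finset A → ℝ) (hρ0 : ∀ S, 0 ≤ ρ S) (hρs : ∀ S ∉ avail, ρ S = 0)
    (hρ1 : ∑ S ∈ avail, ρ S = 1)
    (μ : A → ℝ)
    (w : A → ℝ) (hw0 : ∀ a, 0 ≤ w a) (hw1 : ∑ a, w a = 1)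
    (hwpos : ∀ S ∈ avail, 0 < ∑ a' ∈ S, w a')
    -- the proportional strategy `π` associated with `w`
    (π : Finset A → A → ℝ)
    (hπ : ∀ S a, π S a = if a ∈ S then w a / ∑ a' ∈ S, w a' else 0)
    -- `π` implements `μ`
    (hπμ : ∀ a, μ a = ∑ S ∈ avail, ρ S * π S a)
    -- the joint distribution `P` induced by `π`
    (P : Finset A → A → ℝ) (hP : ∀ S a, P S a = ρ S * π S a)
    -- the set `Ps` of joint distributions induced by strategies implementing `μ`
    (Ps : Set (Finset A → A → ℝ))
    (hPs : Ps = {Q | ∃ π' : Finset A → A → ℝ,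
        (∀ S a, 0 ≤ π' S a) ∧ (∀ S ∈ avail, ∑ a, π' S a = 1) ∧
        (∀ S ∈ avail, ∀ a ∉ S, π' S a = 0) ∧
        (∀ a, μ a = ∑ S ∈ avail, ρ S * π' S a) ∧
        (∀ S a, Q S a = ρ S * π' S a)})
    -- the Shannon entropy (with the convention `0 · log 0 = 0`)
    (H : (Finset A → A → ℝ) → ℝ)
    (hH : ∀ Q, H Q = -∑ S ∈ avail, ∑ a, Q S a * Real.log (Q S a)) :
    P ∈ Ps ∧ ∀ Q ∈ Ps, Q ≠ P → H Q < H P := by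
  have hπ0 : ∀ S a, 0 ≤ π S a := fun S a => by
    rw [hπ]
    split_ifs
    · exact div_nonneg (hw0 a) (sum_nonneg fun b _ => hw0 b)
    · exact le_rfl
  have hπ1 : ∀ S ∈ avail, ∑ a, π S a = 1 := fun S hS => by
    simp only [hπ]
    rw [sum_ite_mem, univ_inter, ← sum_div, div_self (hwpos S hS).ne']
  have hπS : ∀ S ∈ avail, ∀ a ∉ S, π S a = 0 := fun S _ a ha => by rw [hπ, if_neg ha]
  subst hPs
  refine ⟨⟨π, hπ0, hπ1, hπS, hπμ, hP⟩, ?_⟩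
  rintro Q ⟨σ, hσ0, hσ1, hσS, hσμ, hQ⟩ hne
  have hP0 : ∀ S a, 0 ≤ P S a := fun S a => hP S a ▸ mul_nonneg (hρ0 S) (hπ0 S a)
  have hQ0 : ∀ S a, 0 ≤ Q S a := fun S a => hQ S a ▸ mul_nonneg (hρ0 S) (hσ0 S a)
  -- An action of zero weight has zero marginal, so no competitor ever plays it.
  have hQw : ∀ S ∈ avail, ∀ a, w a = 0 → Q S a = 0 := fun S hS a ha => by
    have hμ0 : ∑ S ∈ avail, ρ S * σ S a = 0 := by
      rw [← hσμ a, hπμ a]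
      refine sum_eq_zero fun T _ => ?_
      rw [hπ, ha]
      simp
    rw [hQ]
    exact (sum_eq_zero_iff_of_nonneg fun T _ => mul_nonneg (hρ0 T) (hσ0 T a)).1 hμ0 S hS
  have hPQ : ∀ S ∈ avail, ∀ a, P S a = 0 → Q S a = 0 := fun S hS a h => by
    rw [hP] at h
    rcases mul_eq_zero.1 h with h | h
    · rw [hQ, h, zero_mul]
    · by_cases ha : a ∈ S
      · rw [hπ, if_pos ha] at h
        rcases div_eq_zero_iff.1 h with h | h
        · exact hQw S hS a h
        · exact absurd h (hwpos S hS).ne'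
      · rw [hQ, hσS S hS a ha, mul_zero]
  let f : Finset A → ℝ := fun S => Real.log (ρ S) - Real.log (∑ a' ∈ S, w a')
  let g : A → ℝ := fun a => Real.log (w a)
  have hlog : ∀ S ∈ avail, ∀ a, P S a ≠ 0 → Real.log (P S a) = f S + g a := fun S hS a h => by
    have hρ : ρ S ≠ 0 := fun h' => h (by rw [hP, h', zero_mul])
    have hp : π S a ≠ 0 := fun h' => h (by rw [hP, h', mul_zero])
    have ha : a ∈ S := by
      by_contra ha
      exact hp (hπS S hS a ha)
    have hw : w a ≠ 0 := fun h' => hp (by rw [hπ, h']; simp)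
    rw [hP, Real.log_mul hρ hp, hπ, if_pos ha, Real.log_div hw (hwpos S hS).ne']
    simp only [f, g]
    ring
  have hPlog : ∑ S ∈ avail, ∑ a, P S a * Real.log (P S a)
      = ∑ S ∈ avail, ρ S * f S + ∑ a, μ a * g a := by
    rw [← sum_separable avail ρ μ π hπ1 hπμ f g]
    refine sum_congr rfl fun S hS => sum_congr rfl fun a _ => ?_
    rw [← hP]
    by_cases h : P S a = 0
    · simp [h]
    · rw [hlog S hS a h]
  have hQlog : ∑ S ∈ avail, ∑ a, Q S a * Real.log (P S a)
      = ∑ S ∈ avail, ρ S * f S + ∑ a, μ a * g a := by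
    rw [← sum_separable avail ρ μ σ hσ1 hσμ f g]
    refine sum_congr rfl fun S hS => sum_congr rfl fun a _ => ?_
    rw [← hQ]
    by_cases h : P S a = 0
    · simp [hPQ S hS a h]
    · rw [hlog S hS a h]
  have hmass : ∑ S ∈ avail, ∑ a, (Q S a - P S a) = 0 := by
    refine sum_eq_zero fun S hS => ?_
    simp only [hQ, hP]
    rw [sum_sub_distrib, ← mul_sum, ← mul_sum, hσ1 S hS, hπ1 S hS, sub_self]
  -- A discrepancy between `Q` and `P` lies over `avail`, since both vanish elsewhere.
  obtain ⟨S₀, hS₀, a₀, h₀⟩ : ∃ S ∈ avail, ∃ a, Q S a ≠ P S a := by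
    by_contra! hcon
    refine hne (funext fun S => funext fun a => ?_)
    by_cases hS : S ∈ avail
    · exact hcon S hS a
    · rw [hQ, hP, hρs S hS, zero_mul, zero_mul]
  have key : ∑ S ∈ avail, ∑ a, (Q S a - P S a)
      < ∑ S ∈ avail, ∑ a, (Q S a * Real.log (Q S a) - Q S a * Real.log (P S a)) :=
    sum_lt_sum
      (fun S hS => sum_le_sum fun a _ => gibbs_le (hP0 S a) (hQ0 S a) (hPQ S hS a))
      ⟨S₀, hS₀, sum_lt_sum
        (fun a _ => gibbs_le (hP0 S₀ a) (hQ0 S₀ a) (hPQ S₀ hS₀ a))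
        ⟨a₀, mem_univ _, gibbs_lt (hP0 S₀ a₀) (hQ0 S₀ a₀) (hPQ S₀ hS₀ a₀) h₀⟩⟩
  rw [hmass] at key
  simp only [sum_sub_distrib] at key
  rw [hH, hH]
  linarith
end

section
/- Let A be a finite set, S ⊆ A a nonempty subset, u : A → [−1,1], and for p ∈ Δ(A) define the linear loss ℓ̂(p) = 1 − Σ_{a∈A} p(a) u(a). Let E = {(a,a') : a,a' ∈ A, a ≠ a'}, let q̃ ∈ Δ(E), suppose α := Σ_{(a,a')∈E : a'∈S} q̃(a,a') > 0, and set q(a,a') = q̃(a,a')𝟙{a'∈S}/α. Suppose π ∈ Δ(A) satisfies the fixed-point equation π = Σ_{(a,a')∈E} q(a,a') π_{a→a'}, where π_{a→a'} ∈ Δ(A) is obtained from π by moving all probability mass from a to a' (π_{a→a'}(a) = 0, π_{a→a'}(a') = π(a') + π(a), and π_{a→a'}(b) = π(b) for b ∉ {a,a'}). Define expert losses ℓ(a,a') = ℓ̂(π_{a→a'}) if a' ∈ S and ℓ(a,a') = ℓ̂(π) otherwise. Then Σ_{(a,a')∈E} q̃(a,a') ℓ(a,a') = ℓ̂(π). 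-/
/-!
The loss `lhat u` is affine, so averaging the fixed-point equation against `u` (`hpair`) shows that
the `q`-average of the losses of the moved distributions is the loss of `π`. Since `q̃` restricted
to the awake experts is `α q`, with total mass `α`, these experts contribute `α * lhat u π`.
The asleep experts have total mass `1 - α` and are charged `lhat u π` each. Equivalently, the
deviations of the expert losses from `lhat u π` cancel in the `q̃`-average.
-/

open Finset

/-- `moveMass p a a'` is the distribution obtained from `p` by moving all the
probability mass from `a` to `a'`. -/
def moveMass {A : Type} [DecidableEq A] (p : A → ℝ) (a a' : A) : A → ℝ :=
  fun b => if b = a then 0 else if b = a' then p a' + p a else p b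

/-- The linear loss `ℓ̂(p) = 1 − Σ_a p(a) u(a)`. -/
def lhat {A : Type} [Fintype A] (u : A → ℝ) (p : A → ℝ) : ℝ :=
  1 - ∑ a, p a * u a

/-- **key identity of the SI-MWU analysis.** If `π` is a fixed point of
the awake experts' recommendations, then the `q̃`-weighted average of the expert losses
(asleep experts being charged the loss of `π`) equals the loss of `π`. -/
theorem stmt11 {A : Type} [Fintype A] [DecidableEq A]
    (S : Finset A) (hS : S.Nonempty)
    (u : A → ℝ) (hu : ∀ a, u a ∈ Set.Icc (-1 : ℝ) 1)
    -- `q̃ ∈ Δ(E)` where `E = {(a,a') : a ≠ a'}`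
    (qt : A × A → ℝ) (hqt0 : ∀ e, 0 ≤ qt e) (hqtdiag : ∀ a, qt (a, a) = 0)
    (hqt1 : ∑ e ∈ Finset.univ.filter (fun e : A × A => e.1 ≠ e.2), qt e = 1)
    -- `α = Σ_{(a,a')∈E : a'∈S} q̃(a,a') > 0`
    (α : ℝ)
    (hα : α = ∑ e ∈ Finset.univ.filter (fun e : A × A => e.1 ≠ e.2 ∧ e.2 ∈ S), qt e)
    (hαpos : 0 < α)
    -- the normalized awake weights `q`
    (q : A × A → ℝ)
    (hq : ∀ e : A × A, q e = qt e * (if e.2 ∈ S then (1 : ℝ) else 0) / α)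
    -- `π ∈ Δ(A)` satisfying the fixed-point equation
    (π : A → ℝ) (hπ0 : ∀ a, 0 ≤ π a) (hπ1 : ∑ a, π a = 1)
    (hfix : ∀ b, π b =
      ∑ e ∈ Finset.univ.filter (fun e : A × A => e.1 ≠ e.2),
        q e * moveMass π e.1 e.2 b)
    -- the expert losses
    (ℓ : A × A → ℝ)
    (hℓ : ∀ e : A × A,
      ℓ e = if e.2 ∈ S then lhat u (moveMass π e.1 e.2) else lhat u π) :
    ∑ e ∈ Finset.univ.filter (fun e : A × A => e.1 ≠ e.2), qt e * ℓ e = lhat u π := by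
  set F := Finset.univ.filter (fun e : A × A => e.1 ≠ e.2) with hF
  have hw : ∀ e, qt e * (if e.2 ∈ S then (1 : ℝ) else 0) = α * q e := fun e => by
    rw [hq e]
    field_simp
  have hqsum : ∑ e ∈ F, α * q e = α := by
    simp_rw [← hw, mul_ite, mul_one, mul_zero]
    rw [← Finset.sum_filter, hF, Finset.filter_filter, ← hα]
  -- Pairing the fixed-point equation with `u` and exchanging the two sums.
  have hpair : ∑ b, π b * u b = ∑ e ∈ F, q e * ∑ b, moveMass π e.1 e.2 b * u b := by
    calc ∑ b, π b * u b
        = ∑ b, ∑ e ∈ F, q e * (moveMass π e.1 e.2 b * u b) := by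
          refine Finset.sum_congr rfl fun b _ => ?_
          conv_lhs => rw [hfix b, Finset.sum_mul]
          exact Finset.sum_congr rfl fun e _ => mul_assoc _ _ _
      _ = _ := by
          rw [Finset.sum_comm]
          simp_rw [Finset.mul_sum]
  -- An expert's loss differs from that of `π` only when it is awake.
  have hterm : ∀ e, qt e * ℓ e = qt e * lhat u π + (α * q e * ∑ b, π b * u b
      - α * (q e * ∑ b, moveMass π e.1 e.2 b * u b)) := fun e => by
    rw [← mul_assoc α (q e), ← hw, hℓ]
    split_ifs <;> simp only [lhat] <;> ring
  simp_rw [hterm]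
  rw [Finset.sum_add_distrib, Finset.sum_sub_distrib, ← Finset.sum_mul, ← Finset.sum_mul,
    hqt1, hqsum, ← Finset.mul_sum, ← hpair]
  ring
end

section
/- There is a universal constant C > 0 with the following property. Consider a player i in a GSAS running SI-MWU for T rounds with an appropriately chosen stepsize: initialize q̃^1 uniform on the expert set E = {(a,a') : a,a' ∈ A_i, a≠a'}; at each round t, upon observing the available set S_i^t ∈ 𝒮_i, set q^t(a,a') = q̃^t(a,a')𝟙{a'∈S_i^t}/Σ_{(b,b')∈E} q̃^t(b,b')𝟙{b'∈S_i^t}, let π_i^t(S_i^t) ∈ Δ(A_i) be a solution of the fixed-point system π_i^t(S_i^t) = Σ_{(a,a')∈E} q^t(a,a') π^t_{i,a→a'}(S_i^t) (where π^t_{i,a→a'}(S_i^t) is π_i^t(S_i^t) with all mass on a moved to a'), sample a_i^t ∼ π_i^t(S_i^t), observe the opponents' actions' payoffs u_i(·, a_{−i}^t) ∈ [−1,1]^{A_i}, define ℓ̂^t(p) = 1 − Σ_a p(a) u_i(a, a_{−i}^t), define ℓ^t(a,a') = ℓ̂^t(π^t_{i,a→a'}(S_i^t)) if a' ∈ S_i^t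 and ℓ̂^t(π_i^t(S_i^t)) otherwise, and update q̃^{t+1}(e) ∝ q̃^t(e) exp(−η ℓ^t(e)). Then for any sequence of available action sets {S_i^t} and opponent actions {a_{−i}^t}, the sleeping internal regret satisfies R^INT_{T,i}(a→a') ≤ C·√(T·log|A_i|) for all a, a' ∈ A_i with a ≠ a', where R^INT_{T,i}(a→a') = E[Σ_{t=1}^T 𝟙{a_i^t = a, a' ∈ S_i^t}(u_i(a', a_{−i}^t) − u_i(a_i^t, a_{−i}^t))] and the expectation is over the player's randomization. -/
/-!
The regret increment of a pair `(a, a')` at round `t`, namely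
`π t a * 𝟙{a' ∈ S t} * (u t a' - u t a)`, is exactly the amount by which the loss of the expert
`(a, a')` lies below the played loss `lhat (u t) (π t)`, and asleep experts gain nothing
(`expertLoss_eq`). Because `π t` is a fixed point of the awake experts' recommendations, these
gains average to zero under the lower-level weights `qt t` (`sum_weight_mul_gain_eq_zero`).
Shifting all losses of a round by the same constant does not change the multiplicative-weights
update, so `qt` runs exponential weights on the gains, which lie in `[-2, 2]`. As their weighted
mean vanishes, each normalizer is at most `cosh (2 * η) ≤ exp (2 * η ^ 2)`, which gives regret at
most `log |E| / η + 2 * η * T` (`hedge_regret`). Since `|E| ≤ |A| ^ 2`, the stepsize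
`η = √(log |A| / T)` yields the bound with `C = 4`.
-/

open Finset

/-- The expert set `E = {(a,a') : a ≠ a'}` of ordered pairs of distinct actions. -/
def pairs (A : Type) [Fintype A] [DecidableEq A] : Finset (A × A) :=
  Finset.univ.filter (fun e : A × A => e.1 ≠ e.2)

/-! ### Exponential weights with mean-zero gains -/

section Hedge

variable {ι : Type*} {s : Finset ι} {q g : ℕ → ι → ℝ} {η : ℝ}

lemma hedge_pos (h0 : ∀ e ∈ s, q 0 e = 1 / s.card)
    (hq : ∀ t, ∀ e ∈ s, q (t + 1) e =
      q t e * Real.exp (η * g t e) / ∑ e' ∈ s, q t e' * Real.exp (η * g t e')) (t : ℕ) :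
    ∀ e ∈ s, 0 < q t e := by
  induction t with
  | zero =>
    intro e he
    rw [h0 e he]
    have : 0 < s.card := Finset.card_pos.2 ⟨e, he⟩
    positivity
  | succ t ih =>
    intro e he
    rw [hq t e he]
    exact div_pos (mul_pos (ih e he) (Real.exp_pos _))
      (Finset.sum_pos (fun e' he' => mul_pos (ih e' he') (Real.exp_pos _)) ⟨e, he⟩)

lemma hedge_sum (hs : s.Nonempty) (h0 : ∀ e ∈ s, q 0 e = 1 / s.card)
    (hq : ∀ t, ∀ e ∈ s, q (t + 1) e =
      q t e * Real.exp (η * g t e) / ∑ e' ∈ s, q t e' * Real.exp (η * g t e')) (t : ℕ) :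
    ∑ e ∈ s, q t e = 1 := by
  cases t with
  | zero =>
    have : (s.card : ℝ) ≠ 0 := by exact_mod_cast (Finset.card_pos.2 hs).ne'
    rw [Finset.sum_congr rfl h0, Finset.sum_const, nsmul_eq_mul]
    field_simp
  | succ t =>
    rw [Finset.sum_congr rfl (hq t), ← Finset.sum_div]
    exact div_self (Finset.sum_pos
      (fun e he => mul_pos (hedge_pos h0 hq t e he) (Real.exp_pos _)) hs).ne'

/-- A second-order bound on the normalizer: by convexity `exp (η * x)` lies below the chord over
`[-2, 2]`, and the linear part of the chord averages to zero. -/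
lemma normalizer_le {w x : ι → ℝ} (hw : ∀ e ∈ s, 0 < w e) (hsum : ∑ e ∈ s, w e = 1)
    (hx : ∀ e ∈ s, |x e| ≤ 2) (hmean : ∑ e ∈ s, w e * x e = 0) :
    ∑ e ∈ s, w e * Real.exp (η * x e) ≤ Real.exp (2 * η ^ 2) := by
  calc ∑ e ∈ s, w e * Real.exp (η * x e)
      ≤ ∑ e ∈ s, (w e * Real.cosh (2 * η) + w e * x e * (Real.sinh (2 * η) / 2)) := by
        refine Finset.sum_le_sum fun e he => ?_
        have h1 : |x e / 2| ≤ 1 := by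
          rw [abs_div, abs_two]; linarith [hx e he]
        have h2 := Real.exp_mul_le_cosh_add_mul_sinh h1 (2 * η)
        have h3 : x e / 2 * (2 * η) = η * x e := by ring
        rw [h3] at h2
        calc w e * Real.exp (η * x e)
            ≤ w e * (Real.cosh (2 * η) + x e / 2 * Real.sinh (2 * η)) :=
              mul_le_mul_of_nonneg_left h2 (hw e he).le
          _ = _ := by ring
    _ = Real.cosh (2 * η) := by
        rw [Finset.sum_add_distrib, ← Finset.sum_mul, ← Finset.sum_mul, hsum, hmean]; ring
    _ ≤ Real.exp ((2 * η) ^ 2 / 2) := Real.cosh_le_exp_half_sq _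
    _ = Real.exp (2 * η ^ 2) := by ring_nf

/-- Regret of exponential weights when the gains of every round have weighted mean zero. -/
lemma hedge_regret (hη : 0 < η) (h0 : ∀ e ∈ s, q 0 e = 1 / s.card)
    (hq : ∀ t, ∀ e ∈ s, q (t + 1) e =
      q t e * Real.exp (η * g t e) / ∑ e' ∈ s, q t e' * Real.exp (η * g t e'))
    (hg : ∀ t, ∀ e ∈ s, |g t e| ≤ 2) (hmean : ∀ t, ∑ e ∈ s, q t e * g t e = 0)
    (T : ℕ) {e : ι} (he : e ∈ s) :
    ∑ t ∈ Finset.range T, g t e ≤ Real.log s.card / η + 2 * η * T := by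
  have hpos := hedge_pos h0 hq
  have hsum := hedge_sum ⟨e, he⟩ h0 hq
  have hcard : (0 : ℝ) < s.card := by exact_mod_cast Finset.card_pos.2 ⟨e, he⟩
  have key : ∀ n : ℕ, -Real.log s.card + η * ∑ t ∈ Finset.range n, g t e - 2 * η ^ 2 * n
      ≤ Real.log (q n e) := by
    intro n
    induction n with
    | zero => rw [h0 e he]; simp
    | succ n ih =>
      have hW : 0 < ∑ e' ∈ s, q n e' * Real.exp (η * g n e') :=
        Finset.sum_pos (fun e' he' => mul_pos (hpos n e' he') (Real.exp_pos _)) ⟨e, he⟩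
      have hlog := (Real.log_le_iff_le_exp hW).2
        (normalizer_le (hpos n) (hsum n) (hg n) (hmean n))
      rw [hq n e he, Real.log_div (mul_pos (hpos n e he) (Real.exp_pos _)).ne' hW.ne',
        Real.log_mul (hpos n e he).ne' (Real.exp_pos _).ne', Real.log_exp,
        Finset.sum_range_succ]
      push_cast
      linarith
  have hle : q T e ≤ 1 := by
    rw [← hsum T]
    exact Finset.single_le_sum (fun e' he' => (hpos T e' he').le) he
  have h1 := key T
  have h2 := Real.log_nonpos (hpos T e he).le hle
  have h3 : (∑ t ∈ Finset.range T, g t e) * η ≤ Real.log s.card + 2 * η ^ 2 * T := by linarith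
  calc ∑ t ∈ Finset.range T, g t e ≤ (Real.log s.card + 2 * η ^ 2 * T) / η :=
        (le_div_iff₀ hη).2 h3
    _ = _ := by field_simp

end Hedge

/-! ### Gains of the switching experts -/

section Experts

variable {A : Type} [Fintype A] [DecidableEq A]

lemma sum_moveMass_mul (p u : A → ℝ) {a a' : A} (h : a ≠ a') :
    ∑ b, moveMass p a a' b * u b = ∑ b, p b * u b + p a * (u a' - u a) := by
  have h1 : ∀ b, moveMass p a a' b * u b =
      p b * u b + (if b = a' then p a * u a' else 0) - (if b = a then p a * u a else 0) := by
    intro b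
    unfold moveMass
    split_ifs with h2 h3 h3
    · exact absurd (h2.symm.trans h3) h
    · subst h2; ring
    · subst h3; ring
    · ring
  simp only [h1, Finset.sum_sub_distrib, Finset.sum_add_distrib, Finset.sum_ite_eq',
    Finset.mem_univ, if_true]
  ring

/-- The gain of the expert `e` relative to the played distribution `p` when the available set
is `S`. -/
def gain (S : Finset A) (u p : A → ℝ) (e : A × A) : ℝ :=
  p e.1 * (if e.2 ∈ S then u e.2 - u e.1 else 0)

lemma expertLoss_eq (S : Finset A) (u p : A → ℝ) {e : A × A} (he : e.1 ≠ e.2) :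
    (if e.2 ∈ S then lhat u (moveMass p e.1 e.2) else lhat u p) = lhat u p - gain S u p e := by
  unfold lhat gain
  split_ifs
  · rw [sum_moveMass_mul p u he]; ring
  · ring

lemma abs_gain_le (S : Finset A) {u p : A → ℝ} (hu : ∀ a, u a ∈ Set.Icc (-1 : ℝ) 1)
    (hp : ∀ a, 0 ≤ p a) (hp1 : ∑ a, p a = 1) (e : A × A) : |gain S u p e| ≤ 2 := by
  have h1 : p e.1 ≤ 1 := by
    rw [← hp1]; exact Finset.single_le_sum (fun a _ => hp a) (Finset.mem_univ _)
  have h2 : |if e.2 ∈ S then u e.2 - u e.1 else 0| ≤ 2 := by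
    obtain ⟨h3, h4⟩ := hu e.1
    obtain ⟨h5, h6⟩ := hu e.2
    split_ifs
    · rw [abs_le]; constructor <;> linarith
    · simp
  rw [gain, abs_mul, abs_of_nonneg (hp _)]
  nlinarith [hp e.1, abs_nonneg (if e.2 ∈ S then u e.2 - u e.1 else 0)]

/-- Testing the fixed-point equation against the payoff vector `u` shows that the gains average
to zero. -/
lemma sum_weight_mul_gain_eq_zero {S : Finset A} {u p : A → ℝ} {w : A × A → ℝ}
    (hZ : ∑ e ∈ pairs A, w e * (if e.2 ∈ S then (1 : ℝ) else 0) ≠ 0)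
    (hfix : ∀ b, p b = ∑ e ∈ pairs A, (w e * (if e.2 ∈ S then (1 : ℝ) else 0) /
      ∑ e' ∈ pairs A, w e' * (if e'.2 ∈ S then (1 : ℝ) else 0)) * moveMass p e.1 e.2 b) :
    ∑ e ∈ pairs A, w e * gain S u p e = 0 := by
  set Z := ∑ e ∈ pairs A, w e * (if e.2 ∈ S then (1 : ℝ) else 0) with hZdef
  have h1 : ∑ b, p b * u b = ∑ e ∈ pairs A, (w e * (if e.2 ∈ S then (1 : ℝ) else 0) / Z) *
      (∑ b, p b * u b + p e.1 * (u e.2 - u e.1)) := by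
    calc ∑ b, p b * u b
        = ∑ b, ∑ e ∈ pairs A, (w e * (if e.2 ∈ S then (1 : ℝ) else 0) / Z) *
            (moveMass p e.1 e.2 b * u b) := by
          refine Finset.sum_congr rfl fun b _ => ?_
          conv_lhs => rw [hfix b]
          rw [Finset.sum_mul]
          exact Finset.sum_congr rfl fun e _ => by ring
      _ = _ := by
          rw [Finset.sum_comm]
          refine Finset.sum_congr rfl fun e he => ?_
          rw [← Finset.mul_sum, sum_moveMass_mul p u (Finset.mem_filter.1 he).2]
  have h2 : ∑ e ∈ pairs A, (w e * (if e.2 ∈ S then (1 : ℝ) else 0) / Z) *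
      (∑ b, p b * u b + p e.1 * (u e.2 - u e.1)) =
      ∑ b, p b * u b + (∑ e ∈ pairs A, w e * gain S u p e) / Z := by
    simp only [mul_add, Finset.sum_add_distrib]
    rw [← Finset.sum_mul, ← Finset.sum_div, ← hZdef, div_self hZ, one_mul, Finset.sum_div]
    congr 1
    refine Finset.sum_congr rfl fun e _ => ?_
    unfold gain
    split_ifs <;> ring
  have h3 : (∑ e ∈ pairs A, w e * gain S u p e) / Z = 0 := by linarith
  exact (div_eq_zero_iff.1 h3).resolve_right hZ

/-- With at least two actions, every available action is the target of some expert, so the awake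
experts carry positive total weight. -/
lemma awake_mass_pos {S : Finset A} (hS : S.Nonempty) {a a' : A} (h : a ≠ a') {w : A × A → ℝ}
    (hw : ∀ e ∈ pairs A, 0 < w e) :
    0 < ∑ e ∈ pairs A, w e * (if e.2 ∈ S then (1 : ℝ) else 0) := by
  obtain ⟨x, hx⟩ := hS
  have : Nontrivial A := ⟨a, a', h⟩
  obtain ⟨y, hy⟩ := exists_ne x
  have hmem : (y, x) ∈ pairs A := by simp [pairs, hy]
  refine Finset.sum_pos' (fun e he => ?_) ⟨(y, x), hmem, ?_⟩
  · have := hw e he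
    split_ifs <;> simp [this.le]
  · simpa [hx] using hw _ hmem

/-- The multiplicative-weights update is unchanged when all losses are shifted by a constant. -/
lemma update_shift {ι : Type*} (s : Finset ι) (w x : ι → ℝ) (η c : ℝ) (e : ι) :
    w e * Real.exp (-η * (c - x e)) / ∑ e' ∈ s, w e' * Real.exp (-η * (c - x e')) =
      w e * Real.exp (η * x e) / ∑ e' ∈ s, w e' * Real.exp (η * x e') := by
  have h : ∀ e, w e * Real.exp (-η * (c - x e)) =
      Real.exp (-η * c) * (w e * Real.exp (η * x e)) := by
    intro e
    rw [show -η * (c - x e) = -η * c + η * x e by ring, Real.exp_add]; ring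
  simp only [h, ← Finset.mul_sum]
  exact mul_div_mul_left _ _ (Real.exp_pos _).ne'

lemma log_card_pairs_le {a a' : A} (h : a ≠ a') :
    Real.log (pairs A).card ≤ 2 * Real.log (Fintype.card A) := by
  have hpos : 0 < (pairs A).card := Finset.card_pos.2 ⟨(a, a'), by simp [pairs, h]⟩
  have hle : (pairs A).card ≤ Fintype.card A ^ 2 := by
    calc (pairs A).card ≤ Fintype.card (A × A) := Finset.card_le_univ _
      _ = _ := by rw [Fintype.card_prod, sq]
  calc Real.log (pairs A).card ≤ Real.log ((Fintype.card A : ℝ) ^ 2) :=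
        Real.log_le_log (by exact_mod_cast hpos) (by exact_mod_cast hle)
    _ = _ := by rw [Real.log_pow]; norm_num

end Experts

/-! ### The regret bound -/

/-- **SI-regret bound for SI-MWU.** There is a universal constant
`C > 0` such that for every finite action set `A` and horizon `T` there is an
appropriately chosen stepsize `η > 0` such that: for all sequences of nonempty
availability sets `S t`, payoff vectors `u t` with values in `[-1,1]`, and all
trajectories `(qt, π, ℓ)` of SI-MWU (uniform initialization on the expert set,
normalization among awake experts, fixed point of the awake experts' recommendations,
expert losses charging asleep experts the played loss, multiplicative-weights update),
the expected sleeping internal regret of every ordered pair of distinct actions is at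
most `C·√(T·log|A|)`. -/
theorem stmt12 :
    ∃ C : ℝ, 0 < C ∧
      ∀ (A : Type) (_ : Fintype A) (_ : DecidableEq A) (T : ℕ),
        ∃ η : ℝ, 0 < η ∧
          ∀ (S : ℕ → Finset A) (u : ℕ → A → ℝ),
            (∀ t, (S t).Nonempty) →
            (∀ t a, u t a ∈ Set.Icc (-1 : ℝ) 1) →
            ∀ (qt : ℕ → A × A → ℝ) (π : ℕ → A → ℝ) (ℓ : ℕ → A × A → ℝ),
              -- expert losses: asleep experts are charged the played loss
              (∀ t, ∀ e : A × A, ℓ t e =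
                if e.2 ∈ S t then lhat (u t) (moveMass (π t) e.1 e.2)
                else lhat (u t) (π t)) →
              -- uniform initialization on `E`, weights supported on `E`
              (∀ e ∈ pairs A, qt 0 e = 1 / (pairs A).card) →
              (∀ t, ∀ e ∉ pairs A, qt t e = 0) →
              -- `π t` is a distribution supported in the available set `S t`
              (∀ t, (∀ a, 0 ≤ π t a) ∧ (∑ a, π t a = 1) ∧ (∀ a ∉ S t, π t a = 0)) →
              -- fixed point of the awake experts' recommendations (normalized weights)
              (∀ t, ∀ b, π t b =
                ∑ e ∈ pairs A,
                  (qt t e * (if e.2 ∈ S t then (1 : ℝ) else 0) /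
                      ∑ e' ∈ pairs A, qt t e' * (if e'.2 ∈ S t then (1 : ℝ) else 0)) *
                    moveMass (π t) e.1 e.2 b) →
              -- multiplicative-weights update with stepsize `η`
              (∀ t, ∀ e ∈ pairs A, qt (t + 1) e =
                qt t e * Real.exp (-η * ℓ t e) /
                  ∑ e' ∈ pairs A, qt t e' * Real.exp (-η * ℓ t e')) →
              -- expected sleeping internal regret bound for every pair `a ≠ a'`
              ∀ a a' : A, a ≠ a' →
                (∑ t ∈ Finset.range T,
                    π t a * (if a' ∈ S t then u t a' - u t a else 0)) ≤
                  C * Real.sqrt (T * Real.log (Fintype.card A)) := by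
  refine ⟨4, by norm_num, fun A _ _ T => ?_⟩
  -- The regret is an empty sum for `T = 0` and there are no pairs when `log |A| = 0`; any positive
  -- stepsize serves in these cases.
  refine ⟨if 0 < Real.log (Fintype.card A) / T then
    Real.sqrt (Real.log (Fintype.card A) / T) else 1, ?_, ?_⟩
  · split_ifs with h
    · exact Real.sqrt_pos.2 h
    · exact one_pos
  intro S u hS hu qt π ℓ hℓ h0 _ hπ hfix hupd a a' haa
  rcases Nat.eq_zero_or_pos T with rfl | hT
  · simp
  have hT' : (0 : ℝ) < T := by exact_mod_cast hT
  have hL : 0 < Real.log (Fintype.card A) :=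
    Real.log_pos (by exact_mod_cast Fintype.one_lt_card_iff.2 ⟨a, a', haa⟩)
  rw [if_pos (div_pos hL hT')] at hupd
  set L := Real.log (Fintype.card A) with hLdef
  set η := Real.sqrt (L / T) with hηdef
  have hη : 0 < η := Real.sqrt_pos.2 (div_pos hL hT')
  have hq : ∀ t, ∀ e ∈ pairs A, qt (t + 1) e =
      qt t e * Real.exp (η * gain (S t) (u t) (π t) e) /
        ∑ e' ∈ pairs A, qt t e' * Real.exp (η * gain (S t) (u t) (π t) e') := by
    intro t e he
    have hloss : ∀ e ∈ pairs A, ℓ t e = lhat (u t) (π t) - gain (S t) (u t) (π t) e :=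
      fun e he => (hℓ t e).trans (expertLoss_eq _ _ _ (Finset.mem_filter.1 he).2)
    rw [hupd t e he, hloss e he,
      Finset.sum_congr rfl fun e' he' => by rw [hloss e' he'], update_shift]
  have hmean : ∀ t, ∑ e ∈ pairs A, qt t e * gain (S t) (u t) (π t) e = 0 := fun t =>
    sum_weight_mul_gain_eq_zero
      (awake_mass_pos (hS t) haa
        (hedge_pos (g := fun t => gain (S t) (u t) (π t)) h0 hq t)).ne' (hfix t)
  have hreg := hedge_regret (g := fun t => gain (S t) (u t) (π t)) hη h0 hq
    (fun t e _ => abs_gain_le (S t) (hu t) (hπ t).1 (hπ t).2.1 e) hmean T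
    (e := (a, a')) (by simp [pairs, haa])
  have hcard : Real.log (pairs A).card / η ≤ 2 * L / η :=
    div_le_div_of_nonneg_right (log_card_pairs_le haa) hη.le
  -- The stepsize balances the two terms: both `L / η` and `η * T` equal `√(T * L)`.
  have hηT : η * T = Real.sqrt (T * L) := by
    refine ((Real.sqrt_eq_iff_mul_self_eq (by positivity) (by positivity)).2 (Eq.symm ?_)).symm
    have := Real.mul_self_sqrt (div_pos hL hT').le
    calc η * T * (η * T) = η * η * (T * T) := by ring
      _ = T * L := by rw [hηdef, this]; field_simp
  have hLη : L / η = η * T := by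
    rw [div_eq_iff hη.ne']
    have := Real.mul_self_sqrt (div_pos hL hT').le
    calc L = L / T * T := by field_simp
      _ = η * T * η := by rw [← this]; ring
  calc _ ≤ Real.log (pairs A).card / η + 2 * η * T := hreg
    _ ≤ 2 * L / η + 2 * η * T := by linarith
    _ = 2 * (L / η) + 2 * (η * T) := by ring
    _ = 4 * Real.sqrt (T * L) := by rw [hLη, hηT]; ring
end

section
/- Let A be a finite set, 𝒮 a collection of nonempty subsets of A, ρ a probability distribution on 𝒮, and let μ* be a distribution on A implemented by some strategy π*, i.e., μ*(a) = Σ_{S∈𝒮} ρ(S) π*(a|S) with π*(·|S) a distribution supported in S; set P*(S,a) = ρ(S) π*(a|S). For θ ∈ ℝ^A, define the restricted-softmax strategy π_θ(a|S) = exp(θ_a)𝟙{a∈S}/Σ_{a'∈S} exp(θ_{a'}), the induced marginal μ(θ)(a) = Σ_{S∈𝒮} ρ(S) π_θ(a|S), the joint P(θ)(S,a) = ρ(S) π_θ(a|S), and V(θ) = D_KL(P* ‖ P(θ)) = Σ_{S,a : P*(S,a)>0} P*(S,a) log(P*(S,a)/P(θ)(S,a)). Then V is differentiable on ℝ^A and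 its gradient satisfies ∇_θ V(θ) = μ(θ) − μ*. Consequently, along the ordinary differential equation θ̇(t) = μ* − μ(θ(t)) one has d/dt V(θ(t)) = −‖μ* − μ(θ(t))‖₂². -/
/-!
Softmax probabilities satisfy `log π_θ(a|S) = θ_a - log Z_S(θ)` for `a ∈ S`, where
`Z_S(θ) = ∑_{b ∈ S} exp θ_b`. Hence, up to a constant, the divergence is a linear function plus a
mixture of log-partition functions:
`V(θ) = ∑_S ∑_a P*(S,a) log π*(a|S) - ∑_a μ*(a) θ_a + ∑_S ρ(S) log Z_S(θ)`
(`kl_term_eq` is the pointwise identity). The derivative of `log Z_S` is the expectation under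
`π_θ(·|S)` (`hasFDerivAt_log_partition`), so averaging over `S` gives `∇V(θ) = μ(θ) - μ*`. The
statement along the flow is the chain rule, since there `θ̇ = -∇V(θ)`.
-/

open Finset

/-- The gradient of a log-partition function is the softmax vector, here as a linear form. -/
lemma hasFDerivAt_log_partition {A : Type} [Fintype A] [DecidableEq A]
    (S : Finset A) (hS : S.Nonempty) (θ : EuclideanSpace ℝ A) :
    HasFDerivAt (fun θ : EuclideanSpace ℝ A => Real.log (∑ a ∈ S, Real.exp (θ a)))
      (∑ a, (if a ∈ S then Real.exp (θ a) / ∑ b ∈ S, Real.exp (θ b) else 0) •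
        (EuclideanSpace.proj a : EuclideanSpace ℝ A →L[ℝ] ℝ)) θ := by
  have hZ : (∑ a ∈ S, Real.exp (θ a)) ≠ 0 :=
    (Finset.sum_pos (fun a _ => Real.exp_pos _) hS).ne'
  have hsum : HasFDerivAt (fun θ : EuclideanSpace ℝ A => ∑ a ∈ S, Real.exp (θ a))
      (∑ a ∈ S, Real.exp (θ a) • (EuclideanSpace.proj a : EuclideanSpace ℝ A →L[ℝ] ℝ)) θ :=
    HasFDerivAt.fun_sum fun a _ =>
      (EuclideanSpace.proj a : EuclideanSpace ℝ A →L[ℝ] ℝ).hasFDerivAt.exp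
  refine (hsum.log hZ).congr_fderiv ?_
  simp only [ite_smul, zero_smul, Finset.sum_ite_mem, Finset.univ_inter, Finset.smul_sum, smul_smul]
  exact Finset.sum_congr rfl fun a _ => by rw [inv_mul_eq_div]

/-- One summand of the divergence, written out. Where `r * p = 0` the summand vanishes on both
sides. -/
lemma kl_term_eq {r p x Z : ℝ} (hr : 0 ≤ r) (hp : 0 ≤ p) (hZ : 0 < Z) :
    (if 0 < r * p then r * p * Real.log (r * p / (r * (Real.exp x / Z))) else 0) =
      r * p * Real.log p - r * p * x + r * p * Real.log Z := by
  split_ifs with h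
  · have hr' : r ≠ 0 := left_ne_zero_of_mul h.ne'
    have hp' : p ≠ 0 := right_ne_zero_of_mul h.ne'
    rw [mul_div_mul_left _ _ hr', Real.log_div hp' (div_pos (Real.exp_pos x) hZ).ne',
      Real.log_div (Real.exp_pos x).ne' hZ.ne', Real.log_exp]
    ring
  · rw [le_antisymm (not_lt.1 h) (mul_nonneg hr hp)]
    ring

/-- **Lyapunov computation for the compact-equilibrium stochastic
approximation.** Let `μ*` be implemented by a strategy `π*`, let `P*` be the induced
joint, and for `θ` let `π_θ` be the restricted softmax strategy, `μ(θ)` its marginal,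
and `V(θ) = D_KL(P* ‖ P(θ))`. Then `∇V(θ) = μ(θ) − μ*`, and along the ODE
`θ̇ = μ* − μ(θ)` one has `d/dt V(θ(t)) = −‖μ* − μ(θ(t))‖₂²`. -/
theorem stmt14 {A : Type} [Fintype A] [DecidableEq A] [Nonempty A]
    (avail : Finset (Finset A)) (havail : ∀ S ∈ avail, S.Nonempty)
    (ρ : Finset A → ℝ) (hρ0 : ∀ S, 0 ≤ ρ S) (hρs : ∀ S ∉ avail, ρ S = 0)
    (hρ1 : ∑ S ∈ avail, ρ S = 1)
    -- a strategy `π*` implementing `μ*`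
    (πs : Finset A → A → ℝ)
    (hπs0 : ∀ S a, 0 ≤ πs S a) (hπs1 : ∀ S ∈ avail, ∑ a, πs S a = 1)
    (hπss : ∀ S ∈ avail, ∀ a ∉ S, πs S a = 0)
    (μs : A → ℝ) (hμs : ∀ a, μs a = ∑ S ∈ avail, ρ S * πs S a)
    -- the target joint `P*(S,a) = ρ(S) π*(a|S)`
    (Pstar : Finset A → A → ℝ) (hPstar : ∀ S a, Pstar S a = ρ S * πs S a)
    -- the restricted softmax strategy `π_θ` and its marginal `μ(θ)`
    (πθ : EuclideanSpace ℝ A → Finset A → A → ℝ)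
    (hπθ : ∀ θ S a,
      πθ θ S a = if a ∈ S then Real.exp (θ a) / ∑ a' ∈ S, Real.exp (θ a') else 0)
    (μθ : EuclideanSpace ℝ A → A → ℝ)
    (hμθ : ∀ θ a, μθ θ a = ∑ S ∈ avail, ρ S * πθ θ S a)
    -- the Lyapunov function `V(θ) = D_KL(P* ‖ P(θ))`
    (V : EuclideanSpace ℝ A → ℝ)
    (hV : ∀ θ, V θ = ∑ S ∈ avail, ∑ a,
      if 0 < Pstar S a then Pstar S a * Real.log (Pstar S a / (ρ S * πθ θ S a)) else 0) :
    (∀ θ, HasGradientAt V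
        ((WithLp.equiv 2 (A → ℝ)).symm fun a => μθ θ a - μs a) θ) ∧
      (∀ θ : ℝ → EuclideanSpace ℝ A, ∀ t : ℝ,
        HasDerivAt θ ((WithLp.equiv 2 (A → ℝ)).symm fun a => μs a - μθ (θ t) a) t →
        HasDerivAt (fun s => V (θ s))
          (-‖(WithLp.equiv 2 (A → ℝ)).symm fun a => μs a - μθ (θ t) a‖ ^ 2) t) := by
  have hVeq : V = fun θ => ∑ S ∈ avail, ((∑ a, ρ S * πs S a * Real.log (πs S a))
      - (∑ a, ρ S * πs S a * θ a) + ρ S * Real.log (∑ b ∈ S, Real.exp (θ b))) := by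
    funext θ
    rw [hV]
    refine Finset.sum_congr rfl fun S hS => ?_
    have hZ : 0 < ∑ b ∈ S, Real.exp (θ b) :=
      Finset.sum_pos (fun a _ => Real.exp_pos _) (havail S hS)
    have hterm : ∀ a, (if 0 < Pstar S a then
        Pstar S a * Real.log (Pstar S a / (ρ S * πθ θ S a)) else 0) =
        ρ S * πs S a * Real.log (πs S a) - ρ S * πs S a * θ a
          + ρ S * πs S a * Real.log (∑ b ∈ S, Real.exp (θ b)) := by
      intro a
      rw [hPstar, hπθ]
      by_cases ha : a ∈ S
      · rw [if_pos ha]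
        exact kl_term_eq (hρ0 S) (hπs0 S a) hZ
      · simp [hπss S hS a ha]
    rw [Finset.sum_congr rfl fun a _ => hterm a, Finset.sum_add_distrib, Finset.sum_sub_distrib,
      ← Finset.sum_mul, ← Finset.mul_sum, hπs1 S hS, mul_one]
  have hgrad : ∀ θ, HasGradientAt V
      ((WithLp.equiv 2 (A → ℝ)).symm fun a => μθ θ a - μs a) θ := by
    intro θ
    rw [hasGradientAt_iff_hasFDerivAt, hVeq]
    have hder := HasFDerivAt.fun_sum (u := avail) fun S hS =>
      ((hasFDerivAt_const (∑ a, ρ S * πs S a * Real.log (πs S a)) θ).fun_sub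
        (HasFDerivAt.fun_sum (u := Finset.univ) fun a _ =>
          (EuclideanSpace.proj a : EuclideanSpace ℝ A →L[ℝ] ℝ).hasFDerivAt.const_mul
            (ρ S * πs S a))).fun_add
        ((hasFDerivAt_log_partition S (havail S hS) θ).const_mul (ρ S))
    refine hder.congr_fderiv ?_
    ext v
    simp only [← hπθ]
    simp only [InnerProductSpace.toDual_apply_apply, PiLp.inner_apply, hμθ, hμs, zero_sub,
      WithLp.equiv_symm_apply, RCLike.inner_apply, conj_trivial,
      _root_.sum_apply, add_apply, neg_apply, smul_apply, PiLp.proj_apply, smul_eq_mul, Finset.mul_sum]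
    simp only [← Finset.sum_sub_distrib, Finset.mul_sum, ← Finset.sum_neg_distrib,
      ← Finset.sum_add_distrib]
    rw [Finset.sum_comm]
    refine Finset.sum_congr rfl fun a _ => Finset.sum_congr rfl fun S _ => ?_
    ring
  refine ⟨hgrad, fun θ t hθ => ?_⟩
  have hchain := (hgrad (θ t)).hasFDerivAt.comp_hasDerivAt t hθ
  -- along the flow the velocity is minus the gradient, so the pairing is minus a squared norm
  have hneg : ((WithLp.equiv 2 (A → ℝ)).symm fun a => μθ (θ t) a - μs a) =
      -((WithLp.equiv 2 (A → ℝ)).symm fun a => μs a - μθ (θ t) a) := by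
    ext a
    simp
  rw [hneg, InnerProductSpace.toDual_apply_apply, inner_neg_left,
    real_inner_self_eq_norm_sq] at hchain
  exact hchain
end

section
/- Consider the two-player zero-sum GSAS built from Matching Pennies: both players have actions {H, T}, u_1(H,H) = u_1(T,T) = 1, u_1(H,T) = u_1(T,H) = −1, u_2 = −u_1; player 2 always has both actions available (𝒮_2 = {{H,T}}), while player 1 has 𝒮_1 = {S_{11} = {H,T}, S_{12} = {H}} with ρ_1(S_{11}) = λ and ρ_1(S_{12}) = 1 − λ for a parameter λ ∈ (0, 1/2). Then the strategy profile in which player 1 plays T with probability 1 when S_{11} is available (and necessarily plays H on S_{12}), and player 2 plays T deterministically, is a Nash equilibrium of this GSAS. -/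
/-!
Writing `d₁(S)` and `d₂` for the probability of `H` minus that of `T`, player 1's payoff is
`(λ d₁({H,T}) + (1 - λ) d₁({H})) d₂`, where `d₁({H}) = 1` is forced. Against `d₂ = -1` player 1
minimizes `d₁({H,T})`, that is, plays `T`. Against `d₁({H,T}) = -1` the payoff is `(1 - 2λ) d₂`,
and `λ < 1/2` makes `d₂ = -1`, that is, `T`, optimal for player 2.
-/

open Finset

/-- In the Matching Pennies GSAS (actions `H = true`, `T = false`;
`u₁(a,b) = 1` if `a = b` and `−1` otherwise; player 2 always has both actions; player 1
has `𝒮₁ = {{H,T}, {H}}` with `ρ₁({H,T}) = λ` and `ρ₁({H}) = 1 − λ` for `λ ∈ (0,1/2)`),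
the profile where player 1 plays `T` with probability 1 whenever `{H,T}` is available
(and `H` on `{H}`), and player 2 plays `T` deterministically, is a Nash equilibrium. -/
theorem stmt18 (lam : ℝ) (hlam : lam ∈ Set.Ioo (0 : ℝ) (1 / 2))
    -- the availability distribution of player 1
    (ρ1 : Finset Bool → ℝ)
    (hρ1 : ρ1 = fun S => if S = Finset.univ then lam
      else if S = ({true} : Finset Bool) then 1 - lam else 0)
    -- the expected payoff of player 1 (player 2 always has both actions available)
    (U : (Finset Bool → Bool → ℝ) → (Bool → ℝ) → ℝ)
    (hU : U = fun π1 π2 =>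
      ∑ S ∈ ({Finset.univ, {true}} : Finset (Finset Bool)), ρ1 S *
        ∑ a, ∑ b, π1 S a * π2 b * (if a = b then (1 : ℝ) else -1))
    -- player 1 plays `T = false` whenever it is available, else `H = true`
    (π1 : Finset Bool → Bool → ℝ)
    (hπ1 : π1 = fun S a => if S = Finset.univ then (if a = false then 1 else 0)
      else (if a = true then 1 else 0))
    -- player 2 plays `T = false` deterministically
    (π2 : Bool → ℝ) (hπ2 : π2 = fun b => if b = false then 1 else 0) :
    -- no deviation of player 1 increases `U`, and
    -- no deviation of player 2 decreases `U` (player 2's payoff is `−U`)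
    (∀ π1' : Finset Bool → Bool → ℝ,
      (∀ S a, 0 ≤ π1' S a) →
      (∀ S ∈ ({Finset.univ, {true}} : Finset (Finset Bool)), ∑ a, π1' S a = 1) →
      (∀ S ∈ ({Finset.univ, {true}} : Finset (Finset Bool)), ∀ a ∉ S, π1' S a = 0) →
      U π1' π2 ≤ U π1 π2) ∧
    (∀ π2' : Bool → ℝ, (∀ b, 0 ≤ π2' b) → (∑ b, π2' b = 1) →
      U π1 π2 ≤ U π1 π2') := by
  obtain ⟨h1, h2⟩ := hlam
  have hne : (Finset.univ : Finset Bool) ≠ {true} := by decide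
  -- Both availability sets occur, so `U` is an explicit polynomial in the strategies.
  have key : ∀ p q, U p q =
      lam * ((p univ true - p univ false) * (q true - q false)) +
      (1 - lam) * ((p {true} true - p {true} false) * (q true - q false)) := by
    intro p q
    rw [hU, hρ1]
    simp only [Finset.sum_pair hne, Fintype.sum_bool, if_neg hne.symm, if_true,
      Bool.true_eq_false, Bool.false_eq_true, if_false]
    ring
  refine ⟨fun p hp hs h0 => ?_, fun q hq hs => ?_⟩
  · have a1 := hs univ (by simp)
    have a2 := hs {true} (by simp)
    have a3 := h0 {true} (by simp) false (by simp)
    rw [Fintype.sum_bool] at a1 a2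
    rw [key, key, hπ1, hπ2]
    simp only [if_neg hne.symm, if_true, Bool.true_eq_false, Bool.false_eq_true, if_false]
    have a4 : p {true} true = 1 := by linarith
    rw [a3, a4]
    -- With `T` against `T`, moving weight to `H` on `{H, T}` only loses payoff.
    nlinarith [mul_nonneg h1.le (hp univ true)]
  · rw [Fintype.sum_bool] at hs
    rw [key, key, hπ1, hπ2]
    simp only [if_neg hne.symm, if_true, Bool.true_eq_false, Bool.false_eq_true, if_false]
    -- The payoff is `(1 - 2 * lam) * (q true - q false)`, least at `q true = 0` as `lam < 1 / 2`.
    have h3 : 0 ≤ (1 - 2 * lam) * q true := mul_nonneg (by linarith) (hq true)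
    have h4 : q false = 1 - q true := by linarith
    rw [h4]
    linarith
end
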